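/- There exists a constant C depending only on γ, L_max, L_ψ, L_π, L_0 and R_max such that for every d ≥ 1, every N ≥ 2, every k ∈ ℕ and every δ ∈ (0,1/2), with probability at least 1−δ over the design points and all samples ξ_{k,j}, one has sup_{x∈X} |V̂_k^{up}(x) − V*(x)| ≤ C [ γ^k · sup_{x∈X}|V̂_0^{up}(x) − V*(x)| + sup_{x∈X}|V^π(x) − V*(x)| + √( d·log(d|A|/δ) / M_1 ) + √d · ( N^{−1} log(1/δ) log N )^{1/d} ]. -/

import Mathlib

open MeasureTheory

/-- The unit cube `[0,1]^d` in Euclidean space. -/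
def unitCube (d : ℕ) : Set (EuclideanSpace ℝ (Fin d)) :=
  {y | ∀ i, y i ∈ Set.Icc (0 : ℝ) 1}

/-- The metric `ρ((x,a),(x',a')) = ‖x - x'‖ + 1{a ≠ a'}` on `X × A`. -/
noncomputable def rhoCube {d : ℕ} {A : Type*} [DecidableEq A]
    (p q : EuclideanSpace ℝ (Fin d) × A) : ℝ :=
  dist p.1 q.1 + if p.2 = q.2 then 0 else 1

/-- The optimal central interpolant of `g` from its values at the nodes `xs`, with
slope `L`. -/
noncomputable def centralInterp {X : Type*} [MetricSpace X] {N : ℕ} (xs : Fin N → X)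
    (L : ℝ) (g : X → ℝ) (x : X) : ℝ :=
  ((⨆ ℓ : Fin N, (g (xs ℓ) - L * dist x (xs ℓ))) +
    (⨅ ℓ : Fin N, (g (xs ℓ) + L * dist x (xs ℓ)))) / 2

/-- The Monte Carlo step of approximate UVIP. -/
noncomputable def tildeStep {X A Ξ : Type*} (ψ : X → A → Ξ → X) (r : A → X → ℝ)
    (γ : ℝ) (Vpi : X → ℝ) (M1 M2 : ℕ) (V : X → ℝ) (ξs : ℕ → Ξ) (x : X) : ℝ :=
  (M2 : ℝ)⁻¹ * ∑ j ∈ Finset.Ico M1 (M1 + M2),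
    ⨆ a : A, (r a x + γ * (V (ψ x a (ξs j)) - Vpi (ψ x a (ξs j)) +
      (M1 : ℝ)⁻¹ * ∑ l ∈ Finset.range M1, Vpi (ψ x a (ξs l))))

/-- One realization of the approximate UVIP iterates (Algorithm 2). -/
noncomputable def uvipIter {X A Ξ : Type*} [MetricSpace X] (ψ : X → A → Ξ → X)
    (r : A → X → ℝ) (γ : ℝ) (Vpi : X → ℝ) (M1 M2 : ℕ) (LV : ℝ) {N : ℕ}
    (xs : Fin N → X) (V0 : X → ℝ) : ℕ → (ℕ → ℕ → Ξ) → X → ℝ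
  | 0, _ => V0
  | k + 1, ω =>
      centralInterp xs LV
        (tildeStep ψ r γ Vpi M1 M2 (uvipIter ψ r γ Vpi M1 M2 LV xs V0 k ω) (ω k))

/-- Extension of finitely many samples to an `ℕ × ℕ`-indexed family. -/
noncomputable def extendSamples {Ξ : Type*} [Nonempty Ξ] (k M : ℕ)
    (ω : Fin k → Fin M → Ξ) : ℕ → ℕ → Ξ := fun i j =>
  if h : i < k ∧ j < M then ω ⟨i, h.1⟩ ⟨j, h.2⟩ else Classical.arbitrary Ξ

/-! ### Part 1: geometry of the cube -/

/-- Closed cell of the regular partition of the cube. -/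
def cubeCell {d : ℕ} (m : ℕ) (v : Fin d → Fin m) : Set (EuclideanSpace ℝ (Fin d)) :=
  {y | ∀ i, y i ∈ Set.Icc (((v i : ℕ) : ℝ) / m) ((((v i : ℕ) : ℝ) + 1) / m)}

lemma box_eq {d : ℕ} (a b : Fin d → ℝ) :
    {y : EuclideanSpace ℝ (Fin d) | ∀ i, y i ∈ Set.Icc (a i) (b i)} =
      (WithLp.ofLp) ⁻¹' (Set.pi Set.univ fun i => Set.Icc (a i) (b i)) := by
  ext y; simp only [Set.mem_preimage, Set.mem_pi, Set.mem_univ, true_implies]; rfl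

lemma box_meas {d : ℕ} (a b : Fin d → ℝ) :
    MeasurableSet {y : EuclideanSpace ℝ (Fin d) | ∀ i, y i ∈ Set.Icc (a i) (b i)} := by
  rw [box_eq]
  exact (PiLp.volume_preserving_ofLp (Fin d)).measurable
    (MeasurableSet.univ_pi fun i => measurableSet_Icc)

lemma box_vol {d : ℕ} (a b : Fin d → ℝ) :
    volume {y : EuclideanSpace ℝ (Fin d) | ∀ i, y i ∈ Set.Icc (a i) (b i)} =
      ∏ i, ENNReal.ofReal (b i - a i) := by
  rw [box_eq, (PiLp.volume_preserving_ofLp (Fin d)).measure_preimage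
    (MeasurableSet.univ_pi fun i => measurableSet_Icc).nullMeasurableSet, Set.pi_univ_Icc, Real.volume_Icc_pi]

lemma unitCube_meas (d : ℕ) : MeasurableSet (unitCube d) := box_meas (fun _ => 0) (fun _ => 1)

lemma unitCube_vol (d : ℕ) : volume (unitCube d) = 1 := by
  have := box_vol (d := d) (fun _ => 0) (fun _ => 1)
  simpa [unitCube] using this

instance unitCube_prob (d : ℕ) : IsProbabilityMeasure
    ((volume : Measure (EuclideanSpace ℝ (Fin d))).restrict (unitCube d)) :=
  ⟨by rw [Measure.restrict_apply_univ, unitCube_vol]⟩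

lemma cell_subset {d m : ℕ} (v : Fin d → Fin m) : cubeCell m v ⊆ unitCube d := by
  intro y hy i
  have hm : (0 : ℝ) < m := by
    have := (v i).pos
    exact_mod_cast this
  have h1 := hy i
  have h2 : ((v i : ℕ) : ℝ) + 1 ≤ m := by exact_mod_cast (v i).isLt
  refine ⟨le_trans (by positivity) h1.1, h1.2.trans ?_⟩
  rw [div_le_one hm]; exact h2

lemma cell_meas {d m : ℕ} (v : Fin d → Fin m) : MeasurableSet (cubeCell m v) := box_meas _ _

lemma cell_vol {d m : ℕ} (v : Fin d → Fin m) :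
    (volume.restrict (unitCube d)) (cubeCell m v) = ENNReal.ofReal (((m : ℝ) ^ d)⁻¹) := by
  rw [Measure.restrict_apply (cell_meas v), Set.inter_eq_left.mpr (cell_subset v)]
  have := box_vol (d := d) (fun i => ((v i : ℕ) : ℝ) / m) (fun i => (((v i : ℕ) : ℝ) + 1) / m)
  rw [cubeCell, this]
  have h : ∀ i, (((v i : ℕ) : ℝ) + 1) / m - ((v i : ℕ) : ℝ) / m = (m : ℝ)⁻¹ := by
    intro i; rw [← sub_div]; simp
  simp only [h]
  rw [Finset.prod_const, ← ENNReal.ofReal_pow (by positivity)]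
  simp

lemma exists_cell {d m : ℕ} (hm : 0 < m) {x : EuclideanSpace ℝ (Fin d)} (hx : x ∈ unitCube d) :
    ∃ v : Fin d → Fin m, x ∈ cubeCell m v := by
  have hm' : (0 : ℝ) < m := by exact_mod_cast hm
  have : ∀ i, ∃ j : Fin m, x i ∈ Set.Icc (((j : ℕ) : ℝ) / m) ((((j : ℕ) : ℝ) + 1) / m) := by
    intro i
    obtain ⟨h0, h1⟩ := hx i
    by_cases h : x i = 1
    · refine ⟨⟨m - 1, by omega⟩, ?_⟩
      have e : ((m - 1 : ℕ) : ℝ) = (m : ℝ) - 1 := by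
        rw [Nat.cast_sub hm]; simp
      simp only [e, h]
      constructor
      · rw [div_le_one hm']; linarith
      · rw [le_div_iff₀ hm']; linarith
    · have h1' : x i < 1 := lt_of_le_of_ne h1 h
      have hnn : 0 ≤ x i * m := by positivity
      have hlt : ⌊x i * m⌋₊ < m := by
        rw [Nat.floor_lt hnn]; nlinarith
      refine ⟨⟨⌊x i * m⌋₊, hlt⟩, ?_⟩
      constructor
      · rw [div_le_iff₀ hm']; exact Nat.floor_le hnn
      · rw [le_div_iff₀ hm']; exact (Nat.lt_floor_add_one _).le
  choose v hv using this
  exact ⟨v, hv⟩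

lemma cell_dist {d m : ℕ} {v : Fin d → Fin m} {x y : EuclideanSpace ℝ (Fin d)}
    (hx : x ∈ cubeCell m v) (hy : y ∈ cubeCell m v) : dist x y ≤ Real.sqrt d / m := by
  rw [EuclideanSpace.dist_eq]
  have h : ∀ i, dist (x i) (y i) ^ 2 ≤ ((m : ℝ)⁻¹) ^ 2 := by
    intro i
    have h1 := Real.dist_le_of_mem_Icc (hx i) (hy i)
    rw [← sub_div] at h1
    have h2 : dist (x i) (y i) ≤ (m : ℝ)⁻¹ := by simpa using h1
    exact pow_le_pow_left₀ dist_nonneg h2 2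
  calc Real.sqrt (∑ i, dist (x i) (y i) ^ 2) ≤ Real.sqrt (∑ i : Fin d, ((m : ℝ)⁻¹) ^ 2) :=
        Real.sqrt_le_sqrt (Finset.sum_le_sum fun i _ => h i)
    _ = Real.sqrt d / m := by
        rw [Finset.sum_const, Finset.card_univ, Fintype.card_fin, nsmul_eq_mul,
          Real.sqrt_mul (by positivity), Real.sqrt_sq (by positivity), div_eq_mul_inv]

lemma exists_net (d m : ℕ) (hm : 0 < m) : ∃ S : Finset (EuclideanSpace ℝ (Fin d)),
    (∀ p ∈ S, p ∈ unitCube d) ∧ S.card ≤ m ^ d ∧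
    ∀ x ∈ unitCube d, ∃ p ∈ S, dist x p ≤ Real.sqrt d / m := by
  classical
  have hm' : (0 : ℝ) < m := by exact_mod_cast hm
  let c : (Fin d → Fin m) → EuclideanSpace ℝ (Fin d) :=
    fun v => WithLp.toLp 2 fun i => ((v i : ℕ) : ℝ) / m
  have hc : ∀ v, c v ∈ cubeCell m v := by
    intro v i
    refine ⟨le_refl _, ?_⟩
    change ((v i : ℕ) : ℝ) / m ≤ _
    gcongr; linarith
  refine ⟨Finset.univ.image c, ?_, ?_, ?_⟩
  · intro p hp
    simp only [Finset.mem_image, Finset.mem_univ, true_and] at hp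
    obtain ⟨v, rfl⟩ := hp
    exact cell_subset v (hc v)
  · refine Finset.card_image_le.trans ?_
    simp
  · intro x hx
    obtain ⟨v, hv⟩ := exists_cell hm hx
    exact ⟨c v, Finset.mem_image_of_mem _ (Finset.mem_univ _), cell_dist hv (hc v)⟩

lemma design_prob_cells (d N m : ℕ) (hm : 0 < m) :
    (Measure.pi fun _ : Fin N => volume.restrict (unitCube d))
      {xs | ∃ v : Fin d → Fin m, ∀ l, xs l ∉ cubeCell m v} ≤
      ENNReal.ofReal ((m : ℝ) ^ d * Real.exp (-(N / (m : ℝ) ^ d))) := by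
  have hm' : (1 : ℝ) ≤ m := by exact_mod_cast hm
  have hset : {xs : Fin N → EuclideanSpace ℝ (Fin d) |
      ∃ v : Fin d → Fin m, ∀ l, xs l ∉ cubeCell m v} =
      ⋃ v : Fin d → Fin m, Set.pi Set.univ fun _ : Fin N => (cubeCell m v)ᶜ := by
    ext xs; simp [Set.mem_pi]
  rw [hset]
  refine (measure_iUnion_fintype_le _ _).trans ?_
  have hone : ∀ v : Fin d → Fin m, (Measure.pi fun _ : Fin N => volume.restrict (unitCube d))
      (Set.pi Set.univ fun _ : Fin N => (cubeCell m v)ᶜ) ≤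
      ENNReal.ofReal (Real.exp (-(N / (m : ℝ) ^ d))) := by
    intro v
    rw [Measure.pi_pi, prob_compl_eq_one_sub (cell_meas v), cell_vol, Finset.prod_const,
      ← ENNReal.ofReal_one, ← ENNReal.ofReal_sub _ (by positivity), Finset.card_univ,
      Fintype.card_fin, ← ENNReal.ofReal_pow]
    · apply ENNReal.ofReal_le_ofReal
      have h1 : 1 - ((m : ℝ) ^ d)⁻¹ ≤ Real.exp (-((m : ℝ) ^ d)⁻¹) := by
        have := Real.add_one_le_exp (-((m : ℝ) ^ d)⁻¹); linarith
      have h0 : 0 ≤ 1 - ((m : ℝ) ^ d)⁻¹ := by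
        have := inv_le_one_of_one_le₀ (one_le_pow₀ hm' (n := d)); linarith
      calc _ ≤ (Real.exp (-((m : ℝ) ^ d)⁻¹)) ^ N := pow_le_pow_left₀ h0 h1 N
        _ = _ := by rw [← Real.exp_nat_mul]; congr 1; ring
    · have := inv_le_one_of_one_le₀ (one_le_pow₀ hm' (n := d)); linarith
  refine (Finset.sum_le_sum fun v _ => hone v).trans ?_
  rw [Finset.sum_const, nsmul_eq_mul, ENNReal.ofReal_mul (by positivity)]
  simp

lemma design_prob (d N : ℕ) (hd : 1 ≤ d) (hN : 2 ≤ N) (δ : ℝ) (hδ0 : 0 < δ) (hδ : δ < 1 / 2) :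
    (Measure.pi fun _ : Fin N => volume.restrict (unitCube d))
      {xs | ¬ ((∀ l, xs l ∈ unitCube d) ∧ ∀ x ∈ unitCube d, ∃ l, dist x (xs l) ≤
        12 * (Real.sqrt d * (Real.log (1 / δ) * Real.log N / N) ^ (1 / (d : ℝ))))} ≤
      ENNReal.ofReal (δ / 2) := by
  set μ := (Measure.pi fun _ : Fin N => (volume : Measure (EuclideanSpace ℝ (Fin d))).restrict
    (unitCube d)) with hμ
  set X := Real.log (1 / δ) with hX
  set Y := Real.log N with hY
  set u := X * Y / N with hu
  have hl2 : 0.69 < Real.log 2 := by have := Real.log_two_gt_d9; linarith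
  have hl2' : Real.log 2 < 0.7 := by have := Real.log_two_lt_d9; linarith
  have hXl : 0.69 < X := by
    refine hl2.trans_le (Real.log_le_log (by norm_num) ?_)
    rw [le_div_iff₀ hδ0]; linarith
  have hYl : 0.69 < Y := by
    refine hl2.trans_le (Real.log_le_log (by norm_num) ?_)
    exact_mod_cast hN
  have hNpos : (0 : ℝ) < N := by positivity
  have hupos : 0 < u := by positivity
  have hd0 : (d : ℝ) ≠ 0 := by positivity
  set w := u ^ (1 / (d : ℝ)) with hw
  have hwpos : 0 < w := Real.rpow_pos_of_pos hupos _
  have hwd : w ^ d = u := by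
    rw [hw, ← Real.rpow_natCast, ← Real.rpow_mul hupos.le, one_div, inv_mul_cancel₀ hd0,
      Real.rpow_one]
  -- points lie in the cube almost surely
  have hnull : μ {xs | ¬ ∀ l, xs l ∈ unitCube d} = 0 := by
    have : ∀ᵐ xs ∂μ, ∀ l, xs l ∈ unitCube d := by
      rw [ae_all_iff]
      intro l
      have h1 : ∀ᵐ x ∂((volume : Measure (EuclideanSpace ℝ (Fin d))).restrict (unitCube d)),
          x ∈ unitCube d := ae_restrict_mem (unitCube_meas d)
      exact (measurePreserving_eval (fun _ : Fin N =>
        (volume : Measure (EuclideanSpace ℝ (Fin d))).restrict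
          (unitCube d)) l).quasiMeasurePreserving.ae h1
    exact this
  obtain ⟨m, hm, hm1, hm2⟩ : ∃ m : ℕ, 0 < m ∧ 1 / (m : ℝ) ≤ 12 * w ∧
      (m = 1 ∨ (m : ℝ) * (6 * w) ≤ 1) := by
    by_cases h : 1 ≤ 12 * w
    · exact ⟨1, one_pos, by simpa using h, Or.inl rfl⟩
    · push Not at h
      have hpos : 0 < 1 / (12 * w) := by positivity
      refine ⟨⌈1 / (12 * w)⌉₊, Nat.ceil_pos.mpr hpos, ?_, Or.inr ?_⟩
      · have := Nat.le_ceil (1 / (12 * w))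
        rw [div_le_iff₀ (lt_of_lt_of_le hpos this)]
        rw [div_le_iff₀ (by positivity)] at this
        linarith
      · have := (Nat.ceil_lt_add_one hpos.le).le
        have h2 : 1 ≤ 1 / (12 * w) := by rw [le_div_iff₀ (by positivity)]; linarith
        calc _ ≤ (1 / (12 * w) + 1 / (12 * w)) * (6 * w) := by
              gcongr; linarith
          _ = 1 := by field_simp; norm_num
  by_cases hcase : 1 ≤ 12 * w
  · -- trivial case
    refine le_trans (measure_mono (t := {xs | ¬ ∀ l, xs l ∈ unitCube d}) ?_) (by rw [hnull]; simp)
    intro xs hxs hall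
    refine hxs ⟨hall, fun x hx => ⟨⟨0, by omega⟩, ?_⟩⟩
    obtain ⟨v, hv⟩ := exists_cell (m := 1) one_pos hx
    obtain ⟨v', hv'⟩ := exists_cell (m := 1) one_pos (hall ⟨0, by omega⟩)
    rw [Subsingleton.elim v' v] at hv'
    have := cell_dist hv hv'
    have h3 := Real.sqrt_nonneg d
    rw [Nat.cast_one, div_one] at this
    nlinarith
  · have hmw : (m : ℝ) * (6 * w) ≤ 1 := by
      rcases hm2 with h | h
      · subst h; simp at hm1; exact absurd hm1 hcase
      · exact h
    have hmd : (m : ℝ) ^ d * (6 * u) ≤ 1 := by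
      have h1 : ((m : ℝ) * (6 * w)) ^ d ≤ 1 := pow_le_one₀ (by positivity) hmw
      rw [mul_pow, mul_pow, hwd] at h1
      have h6 : (6 : ℝ) ≤ 6 ^ d := by
        calc (6 : ℝ) = 6 ^ 1 := by norm_num
          _ ≤ 6 ^ d := pow_le_pow_right₀ (by norm_num) hd
      refine le_trans ?_ h1
      gcongr
    have hmdpos : (0 : ℝ) < (m : ℝ) ^ d := by positivity
    refine le_trans (measure_mono (t := {xs | ¬ ∀ l, xs l ∈ unitCube d} ∪
      {xs | ∃ v : Fin d → Fin m, ∀ l, xs l ∉ cubeCell m v}) ?_) ?_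
    · intro xs hxs
      by_contra hcon
      simp only [Set.mem_union, Set.mem_ofPred_eq, not_or, not_not, not_exists, not_forall] at hcon
      refine hxs ⟨hcon.1, fun x hx => ?_⟩
      obtain ⟨v, hv⟩ := exists_cell hm hx
      obtain ⟨l, hl⟩ := hcon.2 v
      refine ⟨l, (cell_dist hv hl).trans ?_⟩
      have h3 := Real.sqrt_nonneg d
      calc Real.sqrt d / m = Real.sqrt d * (1 / m) := by ring
        _ ≤ Real.sqrt d * (12 * w) := by gcongr
        _ = _ := by ring
    · refine (measure_union_le _ _).trans ?_
      rw [hnull, zero_add]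
      refine (design_prob_cells d N m hm).trans (ENNReal.ofReal_le_ofReal ?_)
      have hNm : 6 * (X * Y) ≤ N / (m : ℝ) ^ d := by
        rw [le_div_iff₀ hmdpos]
        have : (m : ℝ) ^ d * (6 * (X * Y)) ≤ N := by
          have e : (m : ℝ) ^ d * (6 * (X * Y)) = (m : ℝ) ^ d * (6 * u) * N := by
            rw [hu]; field_simp
          rw [e]; nlinarith
        linarith
      have hmN : (m : ℝ) ^ d ≤ N := by
        rw [le_div_iff₀ hmdpos] at hNm
        have : 1 ≤ 6 * (X * Y) := by nlinarith
        nlinarith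
      have hXY : X + Y + Real.log 2 ≤ 6 * (X * Y) := by nlinarith
      have hδX : Real.exp (-X) = δ := by
        rw [hX, one_div, Real.log_inv, neg_neg, Real.exp_log hδ0]
      have hNY : Real.exp (-Y) = (N : ℝ)⁻¹ := by
        rw [hY, Real.exp_neg, Real.exp_log hNpos]
      calc (m : ℝ) ^ d * Real.exp (-(N / (m : ℝ) ^ d))
          ≤ N * Real.exp (-X + -Y + -Real.log 2) := by
            gcongr; linarith
        _ = δ / 2 := by
            rw [Real.exp_add, Real.exp_add, hδX, hNY, Real.exp_neg, Real.exp_log (by norm_num)]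
            field_simp

/-! ### Part 2: concentration -/

/-- Monte Carlo error of the empirical mean over the indices in `s`. -/
noncomputable def mcErr {Ξ ι : Type*} [MeasurableSpace Ξ] (P : Measure Ξ) (s : Finset ι)
    (g : Ξ → ℝ) (ω : ι → Ξ) : ℝ :=
  (s.card : ℝ)⁻¹ * ∑ i ∈ s, g (ω i) - ∫ ξ, g ξ ∂P

lemma integrable_bdd {Ξ : Type*} [MeasurableSpace Ξ] {P : Measure Ξ} [IsProbabilityMeasure P]
    {g : Ξ → ℝ} (hg : Measurable g) {b : ℝ} (hb : ∀ ξ, |g ξ| ≤ b) : Integrable g P :=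
  Integrable.of_bound hg.aestronglyMeasurable b (Filter.Eventually.of_forall hb)

lemma mcErr_sub {Ξ ι : Type*} [MeasurableSpace Ξ] (P : Measure Ξ) (s : Finset ι)
    (g h : Ξ → ℝ) (ω : ι → Ξ) (hg : Integrable g P) (hh : Integrable h P) :
    mcErr P s (fun ξ => g ξ - h ξ) ω = mcErr P s g ω - mcErr P s h ω := by
  unfold mcErr
  rw [integral_sub hg hh, Finset.sum_sub_distrib]
  ring

lemma abs_integral_le_bdd {Ξ : Type*} [MeasurableSpace Ξ] (P : Measure Ξ) [IsProbabilityMeasure P]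
    {g : Ξ → ℝ} {b : ℝ} (hb : ∀ ξ, |g ξ| ≤ b) : |∫ ξ, g ξ ∂P| ≤ b := by
  have := norm_integral_le_of_norm_le_const (μ := P) (f := g) (C := b)
    (Filter.Eventually.of_forall hb)
  simpa using this

lemma abs_mean_le {ι : Type*} (s : Finset ι) (hs : 0 < s.card) (g : ι → ℝ) {b : ℝ}
    (hb : ∀ i, |g i| ≤ b) : |(s.card : ℝ)⁻¹ * ∑ i ∈ s, g i| ≤ b := by
  have hs' : (0 : ℝ) < s.card := by exact_mod_cast hs
  rw [abs_mul, abs_of_pos (inv_pos.mpr hs'), inv_mul_le_iff₀ hs']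
  refine (Finset.abs_sum_le_sum_abs _ _).trans ?_
  refine (Finset.sum_le_sum fun i _ => hb i).trans ?_
  simp

lemma abs_mcErr_le {Ξ ι : Type*} [MeasurableSpace Ξ] (P : Measure Ξ) [IsProbabilityMeasure P]
    (s : Finset ι) (hs : 0 < s.card)
    (g : Ξ → ℝ) {b : ℝ} (hb : ∀ ξ, |g ξ| ≤ b) (ω : ι → Ξ) : |mcErr P s g ω| ≤ 2 * b := by
  have h1 := abs_integral_le_bdd P hb
  have h2 := abs_mean_le s hs (fun i => g (ω i)) (fun i => hb (ω i))
  unfold mcErr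
  exact (abs_sub _ _).trans (by linarith)

open ProbabilityTheory in
lemma hoeff_one {Ξ ι : Type*} [MeasurableSpace Ξ] [Fintype ι] (P : Measure Ξ)
    [IsProbabilityMeasure P] (s : Finset ι) (hs : 0 < s.card) (g : Ξ → ℝ) (hg : Measurable g)
    {b : ℝ} (hb0 : 0 < b) (hb : ∀ ξ, |g ξ| ≤ b) {u : ℝ} (hu : 0 ≤ u) :
    (Measure.pi fun _ : ι => P) {ω | b * Real.sqrt (2 * u / s.card) ≤ mcErr P s g ω} ≤
      ENNReal.ofReal (Real.exp (-u)) := by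
  have hs' : (0 : ℝ) < s.card := by exact_mod_cast hs
  set μ := (Measure.pi fun _ : ι => P) with hμ
  have hind : iIndepFun (fun (i : ι) (ω : ι → Ξ) => g (ω i) - ∫ ξ, g ξ ∂P) μ :=
    iIndepFun_pi (μ := fun _ : ι => P) (X := fun _ ξ => g ξ - ∫ ξ, g ξ ∂P)
      (fun i => (hg.sub_const _).aemeasurable)
  have hsub : ∀ i ∈ s, HasSubgaussianMGF (fun ω : ι → Ξ => g (ω i) - ∫ ξ, g ξ ∂P)
      ((‖b - (-b)‖₊ / 2) ^ 2) μ := by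
    intro i _
    have h := hasSubgaussianMGF_of_mem_Icc (μ := P) (a := -b) (b := b) hg.aemeasurable
      (Filter.Eventually.of_forall fun ξ => abs_le.mp (hb ξ))
    have hmp := measurePreserving_eval (fun _ : ι => P) i
    rw [← hmp.map_eq] at h
    have h' := HasSubgaussianMGF.of_map hmp.measurable.aemeasurable h
    rw [hmp.map_eq] at h'
    exact h'
  have key := HasSubgaussianMGF.measure_sum_ge_le_of_iIndepFun hind hsub
    (ε := s.card * (b * Real.sqrt (2 * u / s.card))) (by positivity)
  have hset : {ω : ι → Ξ | b * Real.sqrt (2 * u / s.card) ≤ mcErr P s g ω} =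
      {ω | s.card * (b * Real.sqrt (2 * u / s.card)) ≤ ∑ i ∈ s, (g (ω i) - ∫ ξ, g ξ ∂P)} := by
    ext ω
    simp only [Set.mem_ofPred_eq]
    have : ∑ i ∈ s, (g (ω i) - ∫ ξ, g ξ ∂P) = s.card * mcErr P s g ω := by
      unfold mcErr
      rw [Finset.sum_sub_distrib, Finset.sum_const, nsmul_eq_mul, mul_sub, ← mul_assoc,
        mul_inv_cancel₀ hs'.ne', one_mul]
    rw [this, mul_le_mul_iff_right₀ hs']
  rw [hset, ← ofReal_measureReal]
  refine ENNReal.ofReal_le_ofReal (key.trans (le_of_eq ?_))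
  congr 1
  have hc : ((∑ i ∈ s, (‖b - (-b)‖₊ / 2) ^ 2 : NNReal) : ℝ) = s.card * b ^ 2 := by
    push_cast
    rw [Finset.sum_const, nsmul_eq_mul, Real.norm_eq_abs, div_pow, sq_abs]
    ring
  have hc' := hc
  push_cast at hc'
  push_cast
  rw [hc', mul_pow, mul_pow, Real.sq_sqrt (by positivity)]
  field_simp

lemma hoeff_two {Ξ ι : Type*} [MeasurableSpace Ξ] [Fintype ι] (P : Measure Ξ)
    [IsProbabilityMeasure P] (s : Finset ι) (hs : 0 < s.card) (g : Ξ → ℝ) (hg : Measurable g)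
    {b : ℝ} (hb0 : 0 < b) (hb : ∀ ξ, |g ξ| ≤ b) {u : ℝ} (hu : 0 ≤ u) :
    (Measure.pi fun _ : ι => P) {ω | b * Real.sqrt (2 * u / s.card) < |mcErr P s g ω|} ≤
      ENNReal.ofReal (2 * Real.exp (-u)) := by
  have h1 := hoeff_one P s hs g hg hb0 hb hu
  have h2 := hoeff_one P s hs (fun ξ => - g ξ) hg.neg hb0 (fun ξ => by rw [abs_neg]; exact hb ξ) hu
  have hneg : ∀ ω : ι → Ξ, mcErr P s (fun ξ => - g ξ) ω = - mcErr P s g ω := by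
    intro ω
    unfold mcErr
    rw [integral_neg, Finset.sum_neg_distrib]; ring
  simp only [hneg] at h2
  rw [two_mul (Real.exp (-u)), ENNReal.ofReal_add (by positivity) (by positivity)]
  refine le_trans (measure_mono ?_) ((measure_union_le _ _).trans (add_le_add h1 h2))
  intro ω hω
  rw [Set.mem_ofPred_eq] at hω
  rcases lt_abs.mp hω with h | h
  · exact Or.inl h.le
  · exact Or.inr h.le

/-- Chained functions: value at level `0`, increments at higher levels. -/
def linkFun {E A Ξ : Type*} (f : E → A → Ξ → ℝ) (π : ℕ → E → E) : ℕ → E → A → Ξ → ℝ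
  | 0, q, a => f q a
  | n + 1, q, a => fun ξ => f q a ξ - f (π n q) a ξ

lemma level_count (d c j n : ℕ) (hd : 1 ≤ d) (hc : 1 ≤ c) (δ : ℝ) (hδ0 : 0 < δ)
    (hδ : δ < 1 / 2) :
    ((d : ℝ) * 2 ^ n) ^ d * c *
      (2 * Real.exp (-(6 * (d * Real.log (d * c / δ)) * (n + 1) * (j + 1)))) ≤
      δ / 2 * (1 / 2) ^ (j + 1) * (1 / 2) ^ (n + 1) := by
  have hd' : (1 : ℝ) ≤ d := by exact_mod_cast hd
  have hc' : (1 : ℝ) ≤ c := by exact_mod_cast hc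
  set Λ := Real.log (d * c / δ) with hΛ
  have hΛe : Λ = Real.log d + Real.log c - Real.log δ := by
    rw [hΛ, Real.log_div (by positivity) hδ0.ne', Real.log_mul (by positivity) (by positivity)]
  have hld : 0 ≤ Real.log d := Real.log_nonneg hd'
  have hlc : 0 ≤ Real.log c := Real.log_nonneg hc'
  have hl2 : 0 < Real.log 2 := Real.log_pos (by norm_num)
  have hlδ : Real.log δ ≤ - Real.log 2 := by
    have := Real.log_le_log hδ0 hδ.le
    rwa [one_div, Real.log_inv] at this
  have hΛ2 : Real.log 2 ≤ Λ := by linarith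
  set D := (d : ℝ) * Λ with hD
  have hDΛ : Λ ≤ D := by rw [hD]; nlinarith
  have hmain : d * (Real.log d + n * Real.log 2) + Real.log c + Real.log 2 - Real.log δ
      + Real.log 2 + (j + 1) * Real.log 2 + (n + 1) * Real.log 2 ≤ 6 * D * (n + 1) * (j + 1) := by
    have h1 : d * Real.log d + Real.log c - Real.log δ ≤ D := by
      rw [hD, hΛe]; nlinarith
    have h2 : d * (n * Real.log 2) ≤ n * D := by
      rw [hD]
      have : (n : ℝ) * (d * Real.log 2) ≤ n * (d * Λ) := by gcongr
      linarith
    have h3 : ((j : ℝ) + n + 4) * Real.log 2 ≤ (j + n + 4) * D := by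
      gcongr; linarith
    have h4 : (0 : ℝ) ≤ n * j * D := by
      have : 0 ≤ D := by linarith
      positivity
    have h5 : (0 : ℝ) ≤ n * D := by
      have : 0 ≤ D := by linarith
      positivity
    have h6 : (0 : ℝ) ≤ j * D := by
      have : 0 ≤ D := by linarith
      positivity
    nlinarith
  have e1 : ((d : ℝ) * 2 ^ n) ^ d = Real.exp (d * (Real.log d + n * Real.log 2)) := by
    rw [Real.exp_nat_mul, Real.exp_add, Real.exp_nat_mul, Real.exp_log (by positivity),
      Real.exp_log (by positivity)]
  have e2 : (c : ℝ) = Real.exp (Real.log c) := (Real.exp_log (by positivity)).symm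
  have e3 : (2 : ℝ) = Real.exp (Real.log 2) := (Real.exp_log (by positivity)).symm
  have e4 : ∀ k : ℕ, (1 / 2 : ℝ) ^ k = Real.exp (-(k * Real.log 2)) := by
    intro k
    rw [Real.exp_neg, Real.exp_nat_mul, Real.exp_log (by positivity), one_div, inv_pow]
  have e5 : δ / 2 = Real.exp (Real.log δ - Real.log 2) := by
    rw [Real.exp_sub, Real.exp_log hδ0, Real.exp_log (by positivity)]
  have e6 : 2 * Real.exp (-(6 * D * (n + 1) * (j + 1))) =
      Real.exp (Real.log 2 - (6 * D * (n + 1) * (j + 1))) := by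
    rw [sub_eq_add_neg, Real.exp_add, Real.exp_log (by positivity)]
  have e7 : ((d : ℝ) * 2 ^ n) ^ d * c = Real.exp (d * (Real.log d + n * Real.log 2) +
      Real.log c) := by
    rw [Real.exp_add, ← e1, ← e2]
  rw [e7, e6, e4, e4, e5, ← Real.exp_add, ← Real.exp_add, ← Real.exp_add]
  apply Real.exp_le_exp.mpr
  push_cast
  linarith

lemma chaining {Ξ ι A : Type*} [MeasurableSpace Ξ] [Fintype ι] [Fintype A] [Nonempty A]
    (P : Measure Ξ) [IsProbabilityMeasure P] (s : Finset ι) (hs : 0 < s.card)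
    (d : ℕ) (hd : 1 ≤ d) (f : EuclideanSpace ℝ (Fin d) → A → Ξ → ℝ)
    (hf : ∀ x a, Measurable (f x a)) (K : ℝ) (hK : 0 < K)
    (hfb : ∀ x ∈ unitCube d, ∀ a ξ, |f x a ξ| ≤ K)
    (hfl : ∀ x ∈ unitCube d, ∀ y ∈ unitCube d, ∀ a ξ, |f x a ξ - f y a ξ| ≤ K * dist x y)
    (δ : ℝ) (hδ0 : 0 < δ) (hδ : δ < 1 / 2) (j : ℕ) :
    (Measure.pi fun _ : ι => P) {ω | ¬ ∀ x ∈ unitCube d, ∀ a, |mcErr P s (f x a) ω| ≤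
      4 * (2 * K * (4 * Real.sqrt (d * Real.log (d * Fintype.card A / δ) / s.card)) * (j + 1))} ≤
      ENNReal.ofReal (δ / 2 * (1 / 2) ^ (j + 1)) := by
  have hd' : (1 : ℝ) ≤ d := by exact_mod_cast hd
  have hc : 1 ≤ Fintype.card A := Fintype.card_pos
  have hc' : (1 : ℝ) ≤ Fintype.card A := by exact_mod_cast hc
  have hs' : (0 : ℝ) < s.card := by exact_mod_cast hs
  set D := (d : ℝ) * Real.log (d * Fintype.card A / δ) with hD
  have hD0 : 0 ≤ D := by
    have : 0 ≤ Real.log (d * Fintype.card A / δ) := by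
      apply Real.log_nonneg
      rw [le_div_iff₀ hδ0]; nlinarith
    positivity
  set W := 2 * K * (4 * Real.sqrt (D / s.card)) * (j + 1) with hW
  have hW0 : 0 ≤ W := by positivity
  -- nets
  have hnet : ∀ n : ℕ, ∃ S : Finset (EuclideanSpace ℝ (Fin d)),
      (∀ p ∈ S, p ∈ unitCube d) ∧ S.card ≤ (d * 2 ^ n) ^ d ∧
      ∀ x ∈ unitCube d, ∃ p ∈ S, dist x p ≤ (1 / 2) ^ n := by
    intro n
    obtain ⟨S, h1, h2, h3⟩ := exists_net d (d * 2 ^ n) (by positivity)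
    refine ⟨S, h1, h2, fun x hx => ?_⟩
    obtain ⟨p, hp, hxp⟩ := h3 x hx
    refine ⟨p, hp, hxp.trans ?_⟩
    push_cast
    rw [div_le_iff₀ (by positivity), one_div, inv_pow, mul_comm (d : ℝ), ← mul_assoc,
      inv_mul_cancel₀ (by positivity), one_mul]
    rw [Real.sqrt_le_left (by positivity)]
    nlinarith
  choose S hS hcard hSd using hnet
  have hπ : ∀ n x, ∃ p, x ∈ unitCube d → p ∈ S n ∧ dist x p ≤ (1 / 2) ^ n := by
    intro n x
    by_cases hx : x ∈ unitCube d
    · obtain ⟨p, h1, h2⟩ := hSd n x hx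
      exact ⟨p, fun _ => ⟨h1, h2⟩⟩
    · exact ⟨x, fun h => absurd h hx⟩
  choose π hπ using hπ
  set u : ℕ → ℝ := fun n => 6 * D * (n + 1) * (j + 1) with hu
  have hu0 : ∀ n, 0 ≤ u n := fun n => by simp only [hu]; positivity
  set b : ℕ → ℝ := fun n => 2 * K * (1 / 2) ^ n with hb
  have hb0 : ∀ n, 0 < b n := fun n => by simp only [hb]; positivity
  have hgm : ∀ n q a, Measurable (linkFun f π n q a) := by
    intro n q a
    cases n with
    | zero => exact hf q a
    | succ n => exact (hf q a).sub (hf _ a)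
  have hgb : ∀ n, ∀ q ∈ S n, ∀ a ξ, |linkFun f π n q a ξ| ≤ b n := by
    intro n q hq a ξ
    cases n with
    | zero =>
      have := hfb q (hS 0 q hq) a ξ
      simp only [hb, linkFun, pow_zero]; linarith
    | succ n =>
      have hqc := hS _ q hq
      obtain ⟨h1, h2⟩ := hπ n q hqc
      have h3 := hfl q hqc (π n q) (hS n _ h1) a ξ
      simp only [hb, linkFun]
      refine h3.trans ?_
      calc K * dist q (π n q) ≤ K * (1 / 2) ^ n := by gcongr
        _ = _ := by ring
  have hthr : ∀ n : ℕ, b n * Real.sqrt (2 * u n / s.card) ≤ W * ((n + 1) * (1 / 2) ^ n) := by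
    intro n
    have h1 : Real.sqrt (2 * u n / s.card) ≤
        (4 * Real.sqrt (D / s.card)) * (j + 1) * (n + 1) := by
      apply Real.sqrt_le_iff.mpr
      refine ⟨by positivity, ?_⟩
      have e : ((4 * Real.sqrt (D / s.card)) * (j + 1) * (n + 1)) ^ 2 =
          (D / s.card) * (16 * ((j + 1) * (n + 1)) ^ 2) := by
        rw [mul_pow, mul_pow, mul_pow, Real.sq_sqrt (by positivity)]; ring
      have e2 : 2 * u n / s.card = (D / s.card) * (12 * ((j + 1) * (n + 1))) := by
        simp only [hu]; ring
      rw [e, e2]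
      have h1 : (1 : ℝ) ≤ (j + 1) * (n + 1) := by
        have h1 : (0 : ℝ) ≤ j := by positivity
        have h2 : (0 : ℝ) ≤ n := by positivity
        nlinarith
      have h2 : 0 ≤ D / s.card := by positivity
      apply mul_le_mul_of_nonneg_left _ h2
      nlinarith
    calc _ ≤ b n * ((4 * Real.sqrt (D / s.card)) * (j + 1) * (n + 1)) :=
          mul_le_mul_of_nonneg_left h1 (hb0 n).le
      _ = _ := by simp only [hb, hW]; ring
  -- the good event
  have hgood : {ω : ι → Ξ | ¬ ∀ x ∈ unitCube d, ∀ a, |mcErr P s (f x a) ω| ≤ 4 * W} ⊆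
      ⋃ n : ℕ, ⋃ q ∈ S n, ⋃ a : A,
        {ω | b n * Real.sqrt (2 * u n / s.card) < |mcErr P s (linkFun f π n q a) ω|} := by
    intro ω hω
    by_contra hcon
    simp only [Set.mem_iUnion, Set.mem_ofPred_eq, not_exists, not_lt] at hcon
    apply hω
    have hint : ∀ x ∈ unitCube d, ∀ a, Integrable (f x a) P := fun x hx a =>
      integrable_bdd (hf x a) (hfb x hx a)
    have hlev : ∀ n : ℕ, ∀ q ∈ S n, ∀ a, |mcErr P s (f q a) ω| ≤
        W * (4 - (n + 3) * (1 / 2) ^ n) := by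
      intro n
      induction n with
      | zero =>
        intro q hq a
        have h1 := (hcon 0 q hq a).trans (hthr 0)
        simp only [linkFun] at h1
        norm_num at h1 ⊢
        exact h1
      | succ n ih =>
        intro q hq a
        have hqc := hS _ q hq
        obtain ⟨h1, h2⟩ := hπ n q hqc
        have h3 := (hcon (n + 1) q hq a).trans (hthr (n + 1))
        have h4 := ih _ h1 a
        simp only [linkFun] at h3
        rw [mcErr_sub P s _ _ ω (hint q hqc a) (hint _ (hS n _ h1) a)] at h3
        have h5 : |mcErr P s (f q a) ω| ≤ |mcErr P s (f (π n q) a) ω| +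
            |mcErr P s (f q a) ω - mcErr P s (f (π n q) a) ω| := by
          have := abs_add_le (mcErr P s (f (π n q) a) ω)
            (mcErr P s (f q a) ω - mcErr P s (f (π n q) a) ω)
          simpa using this
        refine h5.trans ((add_le_add h4 h3).trans (le_of_eq ?_))
        push_cast
        ring
    intro x hx a
    apply le_of_forall_pos_le_add
    intro ε hε
    obtain ⟨n, hn⟩ := exists_pow_lt_of_lt_one (show 0 < ε / (2 * K) by positivity)
      (show (1 / 2 : ℝ) < 1 by norm_num)
    rw [lt_div_iff₀ (by positivity)] at hn
    obtain ⟨h1, h2⟩ := hπ n x hx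
    have hpc := hS n _ h1
    have h3 := hlev n _ h1 a
    have h4 := abs_mcErr_le P s hs (fun ξ => f x a ξ - f (π n x) a ξ)
      (fun ξ => hfl x hx _ hpc a ξ) ω
    rw [mcErr_sub P s _ _ ω (hint x hx a) (hint _ hpc a)] at h4
    have h5 : |mcErr P s (f x a) ω| ≤ |mcErr P s (f (π n x) a) ω| +
        |mcErr P s (f x a) ω - mcErr P s (f (π n x) a) ω| := by
      have := abs_add_le (mcErr P s (f (π n x) a) ω)
        (mcErr P s (f x a) ω - mcErr P s (f (π n x) a) ω)
      simpa using this
    have h6 : W * (4 - (n + 3) * (1 / 2) ^ n) ≤ 4 * W := by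
      have : 0 ≤ W * ((n + 3) * (1 / 2) ^ n) := by positivity
      nlinarith
    have h7 : K * dist x (π n x) ≤ K * (1 / 2) ^ n := by gcongr
    linarith
  refine (measure_mono hgood).trans ?_
  refine (measure_iUnion_le _).trans ?_
  have hlevel : ∀ n : ℕ, (Measure.pi fun _ : ι => P) (⋃ q ∈ S n, ⋃ a : A,
      {ω | b n * Real.sqrt (2 * u n / s.card) < |mcErr P s (linkFun f π n q a) ω|}) ≤
      ENNReal.ofReal (δ / 2 * (1 / 2) ^ (j + 1) * (1 / 2) ^ (n + 1)) := by
    intro n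
    refine (measure_biUnion_finset_le _ _).trans ?_
    have h1 : ∀ q ∈ S n, (Measure.pi fun _ : ι => P) (⋃ a : A,
        {ω | b n * Real.sqrt (2 * u n / s.card) < |mcErr P s (linkFun f π n q a) ω|}) ≤
        ENNReal.ofReal (Fintype.card A * (2 * Real.exp (-(u n)))) := by
      intro q hq
      refine (measure_iUnion_fintype_le _ _).trans ?_
      refine (Finset.sum_le_sum fun a _ => hoeff_two P s hs _ (hgm n q a) (hb0 n)
        (hgb n q hq a) (hu0 n)).trans ?_
      rw [Finset.sum_const, nsmul_eq_mul, ENNReal.ofReal_mul (by positivity : (0:ℝ) ≤ Fintype.card A)]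
      simp
    refine (Finset.sum_le_sum h1).trans ?_
    rw [Finset.sum_const, nsmul_eq_mul, ← ENNReal.ofReal_natCast,
      ← ENNReal.ofReal_mul (by positivity)]
    apply ENNReal.ofReal_le_ofReal
    refine le_trans ?_ (level_count d (Fintype.card A) j n hd hc δ hδ0 hδ)
    rw [← mul_assoc]
    have : ((S n).card : ℝ) ≤ ((d : ℝ) * 2 ^ n) ^ d := by exact_mod_cast hcard n
    gcongr
  refine (ENNReal.tsum_le_tsum hlevel).trans ?_
  have hsum : HasSum (fun n : ℕ => δ / 2 * (1 / 2 : ℝ) ^ (j + 1) * (1 / 2) ^ (n + 1))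
      (δ / 2 * (1 / 2) ^ (j + 1)) := by
    have h := (hasSum_geometric_two).mul_left (δ / 2 * (1 / 2 : ℝ) ^ (j + 1) * (1 / 2))
    have e1 : (fun n : ℕ => δ / 2 * (1 / 2 : ℝ) ^ (j + 1) * (1 / 2) ^ (n + 1)) =
        fun n : ℕ => δ / 2 * (1 / 2 : ℝ) ^ (j + 1) * (1 / 2) * (1 / 2) ^ n := by
      funext n; ring
    have e2 : δ / 2 * (1 / 2 : ℝ) ^ (j + 1) = δ / 2 * (1 / 2 : ℝ) ^ (j + 1) * (1 / 2) * 2 := by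
      ring
    rw [e1]
    rw [← e2] at h
    exact h
  rw [← ENNReal.ofReal_tsum_of_nonneg (fun n => by positivity) hsum.summable, hsum.tsum_eq]

/-! ### Part 3: deterministic analysis -/

lemma abs_ciSup_sub_le {ι : Type*} [Finite ι] [Nonempty ι] (f g : ι → ℝ) {c : ℝ}
    (h : ∀ i, |f i - g i| ≤ c) : |(⨆ i, f i) - ⨆ i, g i| ≤ c := by
  rw [abs_le]
  constructor
  · have : (⨆ i, g i) ≤ (⨆ i, f i) + c := ciSup_le fun i => by
      have h1 := le_ciSup (Set.finite_range f).bddAbove i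
      have h2 := abs_le.mp (h i)
      linarith
    linarith
  · have : (⨆ i, f i) ≤ (⨆ i, g i) + c := ciSup_le fun i => by
      have h1 := le_ciSup (Set.finite_range g).bddAbove i
      have h2 := abs_le.mp (h i)
      linarith
    linarith

lemma abs_ciInf_sub_le {ι : Type*} [Finite ι] [Nonempty ι] (f g : ι → ℝ) {c : ℝ}
    (h : ∀ i, |f i - g i| ≤ c) : |(⨅ i, f i) - ⨅ i, g i| ≤ c := by
  rw [abs_le]
  constructor
  · have : (⨅ i, g i) - c ≤ (⨅ i, f i) := le_ciInf fun i => by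
      have h1 := ciInf_le (Set.finite_range g).bddBelow i
      have h2 := abs_le.mp (h i)
      linarith
    linarith
  · have : (⨅ i, f i) - c ≤ (⨅ i, g i) := le_ciInf fun i => by
      have h1 := ciInf_le (Set.finite_range f).bddBelow i
      have h2 := abs_le.mp (h i)
      linarith
    linarith

lemma centralInterp_lip {X : Type*} [MetricSpace X] {N : ℕ} [Nonempty (Fin N)] (xs : Fin N → X)
    {L : ℝ} (hL : 0 ≤ L) (g : X → ℝ) (x y : X) :
    |centralInterp xs L g x - centralInterp xs L g y| ≤ L * dist x y := by
  have hd : ∀ l, |L * dist x (xs l) - L * dist y (xs l)| ≤ L * dist x y := by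
    intro l
    rw [← mul_sub, abs_mul, abs_of_nonneg hL]
    exact mul_le_mul_of_nonneg_left (abs_dist_sub_le x y (xs l)) hL
  have h1 := abs_ciSup_sub_le (fun l => g (xs l) - L * dist x (xs l))
    (fun l => g (xs l) - L * dist y (xs l)) (c := L * dist x y) (fun l => by
      have := hd l
      rw [abs_le] at this ⊢
      constructor <;> linarith)
  have h2 := abs_ciInf_sub_le (fun l => g (xs l) + L * dist x (xs l))
    (fun l => g (xs l) + L * dist y (xs l)) (c := L * dist x y) (fun l => by
      have := hd l
      rw [abs_le] at this ⊢
      constructor <;> linarith)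
  unfold centralInterp
  rw [abs_le] at h1 h2 ⊢
  constructor <;> linarith

lemma centralInterp_err {X : Type*} [MetricSpace X] {N : ℕ} [Nonempty (Fin N)] (xs : Fin N → X)
    {L : ℝ} (hL : 0 ≤ L) (g : X → ℝ) (Q : Set X)
    (hg : ∀ x ∈ Q, ∀ y ∈ Q, |g x - g y| ≤ L * dist x y) (hxs : ∀ l, xs l ∈ Q) {x : X} (hx : x ∈ Q)
    {ρ : ℝ} (hρ : ∃ l, dist x (xs l) ≤ ρ) :
    |centralInterp xs L g x - g x| ≤ L * ρ := by
  obtain ⟨l, hl⟩ := hρ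
  have h0 : L * dist x (xs l) ≤ L * ρ := mul_le_mul_of_nonneg_left hl hL
  have hgl := abs_le.mp (hg x hx (xs l) (hxs l))
  have s1 : (⨆ l, (g (xs l) - L * dist x (xs l))) ≤ g x := ciSup_le fun i => by
    have := abs_le.mp (hg x hx (xs i) (hxs i))
    linarith
  have s2 := le_ciSup (Set.finite_range fun l => g (xs l) - L * dist x (xs l)).bddAbove l
  have i1 : g x ≤ ⨅ l, (g (xs l) + L * dist x (xs l)) := le_ciInf fun i => by
    have := abs_le.mp (hg x hx (xs i) (hxs i))
    linarith
  have i2 := ciInf_le (Set.finite_range fun l => g (xs l) + L * dist x (xs l)).bddBelow l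
  unfold centralInterp
  rw [abs_le]
  constructor <;> linarith

lemma mean_diff_le (s : Finset ℕ) {M : ℕ} (hM : 0 < M) (hs : s.card = M) (f g : ℕ → ℝ) {c : ℝ}
    (h : ∀ i ∈ s, |f i - g i| ≤ c) :
    |(M : ℝ)⁻¹ * ∑ i ∈ s, f i - (M : ℝ)⁻¹ * ∑ i ∈ s, g i| ≤ c := by
  have hM' : (0 : ℝ) < M := by exact_mod_cast hM
  rw [← mul_sub, ← Finset.sum_sub_distrib, abs_mul, abs_of_pos (inv_pos.mpr hM'),
    inv_mul_le_iff₀ hM']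
  refine (Finset.abs_sum_le_sum_abs _ _).trans ((Finset.sum_le_sum h).trans ?_)
  rw [Finset.sum_const, hs, nsmul_eq_mul]

lemma tildeStep_lip {X A Ξ : Type*} [MetricSpace X] [Finite A] [Nonempty A] (Q : Set X)
    (ψ : X → A → Ξ → X) (r : A → X → ℝ) {γ : ℝ} (hγ : 0 ≤ γ) (Vpi V : X → ℝ) {M1 M2 : ℕ}
    (hM1 : 1 ≤ M1) (hM2 : 1 ≤ M2) {Lmax Lpsi Lpi L : ℝ} (hL : 0 ≤ L)
    (hQ : ∀ x ∈ Q, ∀ a ξ, ψ x a ξ ∈ Q)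
    (hr : ∀ a, ∀ x ∈ Q, ∀ y ∈ Q, |r a x - r a y| ≤ Lmax * dist x y)
    (hψ : ∀ a ξ, ∀ x ∈ Q, ∀ y ∈ Q, dist (ψ x a ξ) (ψ y a ξ) ≤ Lpsi * dist x y)
    (hVpi : ∀ a ξ, ∀ x ∈ Q, ∀ y ∈ Q, |Vpi (ψ x a ξ) - Vpi (ψ y a ξ)| ≤ Lpi * dist x y)
    (hV : ∀ x ∈ Q, ∀ y ∈ Q, |V x - V y| ≤ L * dist x y) (ξs : ℕ → Ξ)
    (x : X) (hx : x ∈ Q) (y : X) (hy : y ∈ Q) :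
    |tildeStep ψ r γ Vpi M1 M2 V ξs x - tildeStep ψ r γ Vpi M1 M2 V ξs y| ≤
      (Lmax + 2 * γ * Lpi + γ * Lpsi * L) * dist x y := by
  unfold tildeStep
  refine mean_diff_le _ (by omega) (by simp) _ _ fun j _ => ?_
  refine abs_ciSup_sub_le _ _ fun a => ?_
  have h1 := hr a x hx y hy
  have h2 : |V (ψ x a (ξs j)) - V (ψ y a (ξs j))| ≤ L * (Lpsi * dist x y) :=
    (hV _ (hQ x hx a _) _ (hQ y hy a _)).trans
      (mul_le_mul_of_nonneg_left (hψ a _ x hx y hy) hL)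
  have h3 := hVpi a (ξs j) x hx y hy
  have h4 := mean_diff_le (Finset.range M1) (M := M1) (by omega) (by simp)
    (fun l => Vpi (ψ x a (ξs l))) (fun l => Vpi (ψ y a (ξs l)))
    (fun l _ => hVpi a (ξs l) x hx y hy)
  have h5 : |(V (ψ x a (ξs j)) - Vpi (ψ x a (ξs j)) +
      (M1 : ℝ)⁻¹ * ∑ l ∈ Finset.range M1, Vpi (ψ x a (ξs l))) -
      (V (ψ y a (ξs j)) - Vpi (ψ y a (ξs j)) +
      (M1 : ℝ)⁻¹ * ∑ l ∈ Finset.range M1, Vpi (ψ y a (ξs l)))| ≤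
      L * (Lpsi * dist x y) + Lpi * dist x y + Lpi * dist x y := by
    rw [abs_le] at h2 h3 h4 ⊢
    constructor <;> linarith
  have h6 := mul_le_mul_of_nonneg_left h5 hγ
  rw [← abs_of_nonneg hγ, ← abs_mul, abs_of_nonneg hγ, mul_sub] at h6
  rw [abs_le] at h1 h6 ⊢
  constructor <;> nlinarith

lemma tildeStep_err {X A Ξ : Type*} [Finite A] [Nonempty A] [MeasurableSpace Ξ]
    (P : Measure Ξ) [IsProbabilityMeasure P] (Q : Set X)
    (ψ : X → A → Ξ → X) (r : A → X → ℝ) {γ : ℝ} (hγ : 0 ≤ γ) (Vpi V Vstar : X → ℝ) {M1 M2 : ℕ}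
    (hM2 : 1 ≤ M2)
    (hQ : ∀ x ∈ Q, ∀ a ξ, ψ x a ξ ∈ Q)
    (hi1 : ∀ x ∈ Q, ∀ a, Integrable (fun ξ => Vpi (ψ x a ξ)) P)
    (hi2 : ∀ x ∈ Q, ∀ a, Integrable (fun ξ => Vstar (ψ x a ξ)) P)
    (hfix : ∀ x ∈ Q, Vstar x = ⨆ a : A, (r a x + γ * ∫ ξ, Vstar (ψ x a ξ) ∂P))
    {E D G : ℝ} (hV : ∀ x ∈ Q, |V x - Vstar x| ≤ E) (hD : ∀ x ∈ Q, |Vpi x - Vstar x| ≤ D)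
    (ξs : ℕ → Ξ)
    (hG : ∀ x ∈ Q, ∀ a, |(M1 : ℝ)⁻¹ * ∑ l ∈ Finset.range M1, Vpi (ψ x a (ξs l)) -
      ∫ ξ, Vpi (ψ x a ξ) ∂P| ≤ G)
    (x : X) (hx : x ∈ Q) :
    |tildeStep ψ r γ Vpi M1 M2 V ξs x - Vstar x| ≤ γ * (E + 2 * D + G) := by
  have hM2' : (M2 : ℝ) ≠ 0 := by positivity
  have hconst : Vstar x = (M2 : ℝ)⁻¹ * ∑ j ∈ Finset.Ico M1 (M1 + M2),
      ⨆ a : A, (r a x + γ * ∫ ξ, Vstar (ψ x a ξ) ∂P) := by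
    rw [Finset.sum_const, ← hfix x hx]
    simp [hM2']
  rw [hconst]
  unfold tildeStep
  refine mean_diff_le _ (by omega) (by simp) _ _ fun j _ => ?_
  refine abs_ciSup_sub_le _ _ fun a => ?_
  have h1 := hV _ (hQ x hx a (ξs j))
  have h2 := hD _ (hQ x hx a (ξs j))
  have h3 := hG x hx a
  have h4 : |∫ ξ, Vpi (ψ x a ξ) ∂P - ∫ ξ, Vstar (ψ x a ξ) ∂P| ≤ D := by
    rw [← integral_sub (hi1 x hx a) (hi2 x hx a)]
    exact abs_integral_le_bdd P fun ξ => hD _ (hQ x hx a ξ)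
  rw [add_sub_add_left_eq_sub, ← mul_sub, abs_mul, abs_of_nonneg hγ]
  refine mul_le_mul_of_nonneg_left ?_ hγ
  rw [abs_le] at h1 h2 h3 h4 ⊢
  constructor <;> linarith

lemma uvip_det {X A Ξ : Type*} [MetricSpace X] [Finite A] [Nonempty A] [MeasurableSpace Ξ]
    (P : Measure Ξ) [IsProbabilityMeasure P] (Q : Set X)
    (ψ : X → A → Ξ → X) (r : A → X → ℝ) {γ : ℝ} (hγ0 : 0 < γ) (hγ1 : γ < 1)
    (Vpi V0 Vstar : X → ℝ) {M1 M2 : ℕ}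
    (hM1 : 1 ≤ M1) (hM2 : 1 ≤ M2) {Lmax Lpsi Lpi LV : ℝ} (hL : 0 ≤ LV)
    (hLV : Lmax + 2 * γ * Lpi + γ * Lpsi * LV ≤ LV)
    (hQ : ∀ x ∈ Q, ∀ a ξ, ψ x a ξ ∈ Q)
    (hr : ∀ a, ∀ x ∈ Q, ∀ y ∈ Q, |r a x - r a y| ≤ Lmax * dist x y)
    (hψ : ∀ a ξ, ∀ x ∈ Q, ∀ y ∈ Q, dist (ψ x a ξ) (ψ y a ξ) ≤ Lpsi * dist x y)
    (hVpi : ∀ a ξ, ∀ x ∈ Q, ∀ y ∈ Q, |Vpi (ψ x a ξ) - Vpi (ψ y a ξ)| ≤ Lpi * dist x y)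
    (hV0 : ∀ x ∈ Q, ∀ y ∈ Q, |V0 x - V0 y| ≤ LV * dist x y)
    (hi1 : ∀ x ∈ Q, ∀ a, Integrable (fun ξ => Vpi (ψ x a ξ)) P)
    (hi2 : ∀ x ∈ Q, ∀ a, Integrable (fun ξ => Vstar (ψ x a ξ)) P)
    (hfix : ∀ x ∈ Q, Vstar x = ⨆ a : A, (r a x + γ * ∫ ξ, Vstar (ψ x a ξ) ∂P))
    {E D G ρ : ℝ} (hE : ∀ x ∈ Q, |V0 x - Vstar x| ≤ E) (hD : ∀ x ∈ Q, |Vpi x - Vstar x| ≤ D)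
    (hD0 : 0 ≤ D) (hG0 : 0 ≤ G) (hρ0 : 0 ≤ ρ)
    {N : ℕ} [Nonempty (Fin N)] (xs : Fin N → X) (hxs : ∀ l, xs l ∈ Q)
    (hρ : ∀ x ∈ Q, ∃ l, dist x (xs l) ≤ ρ) (k : ℕ) (ω : ℕ → ℕ → Ξ)
    (hG : ∀ i < k, ∀ x ∈ Q, ∀ a, |(M1 : ℝ)⁻¹ * ∑ l ∈ Finset.range M1, Vpi (ψ x a (ω i l)) -
      ∫ ξ, Vpi (ψ x a ξ) ∂P| ≤ G * (k - i)) (m : ℕ) (hm : m ≤ k) :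
    (∀ x ∈ Q, ∀ y ∈ Q, |uvipIter ψ r γ Vpi M1 M2 LV xs V0 m ω x -
      uvipIter ψ r γ Vpi M1 M2 LV xs V0 m ω y| ≤ LV * dist x y) ∧
    ∀ x ∈ Q, |uvipIter ψ r γ Vpi M1 M2 LV xs V0 m ω x - Vstar x| ≤
      γ ^ m * E + (2 * D + LV * ρ) * (1 - γ)⁻¹ +
        G * ((1 - γ)⁻¹ * (k - m) + ((1 - γ)⁻¹) ^ 2) := by
  have hα0 : 0 < (1 - γ)⁻¹ := inv_pos.mpr (by linarith)
  have hα : (1 - γ)⁻¹ = 1 + γ * (1 - γ)⁻¹ := by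
    have : (1 - γ) ≠ 0 := by linarith
    field_simp; ring
  set α := (1 - γ)⁻¹ with hαd
  induction m with
  | zero =>
    refine ⟨hV0, fun x hx => ?_⟩
    have h1 := hE x hx
    have h2 : 0 ≤ (2 * D + LV * ρ) * α := by positivity
    have h3 : 0 ≤ G * (α * (k - (0 : ℕ)) + α ^ 2) := by
      rw [Nat.cast_zero, sub_zero]; positivity
    simp only [uvipIter, pow_zero, one_mul]
    linarith
  | succ m ih =>
    obtain ⟨ihL, ihE⟩ := ih (by omega)
    set V := uvipIter ψ r γ Vpi M1 M2 LV xs V0 m ω with hV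
    simp only [uvipIter, ← hV]
    refine ⟨fun x _ y _ => centralInterp_lip xs hL _ x y, fun x hx => ?_⟩
    have hTl : ∀ x ∈ Q, ∀ y ∈ Q, |tildeStep ψ r γ Vpi M1 M2 V (ω m) x -
        tildeStep ψ r γ Vpi M1 M2 V (ω m) y| ≤ LV * dist x y := fun x hx y hy =>
      (tildeStep_lip Q ψ r hγ0.le Vpi V hM1 hM2 hL hQ hr hψ hVpi ihL (ω m) x hx y hy).trans
        (mul_le_mul_of_nonneg_right hLV dist_nonneg)
    have h1 := centralInterp_err xs hL (tildeStep ψ r γ Vpi M1 M2 V (ω m)) Q hTl hxs hx (hρ x hx)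
    have h2 := tildeStep_err P Q ψ r hγ0.le Vpi V Vstar (M1 := M1) hM2 hQ hi1 hi2 hfix ihE hD (ω m)
      (hG m (by omega)) x hx
    have h3 : |centralInterp xs LV (tildeStep ψ r γ Vpi M1 M2 V (ω m)) x - Vstar x| ≤
        LV * ρ + γ * (γ ^ m * E + (2 * D + LV * ρ) * α +
        G * (α * (k - m) + α ^ 2) + 2 * D + G * (k - m)) := by
      rw [abs_le] at h1 h2 ⊢
      constructor <;> linarith
    refine h3.trans ?_
    have hkm : (0 : ℝ) ≤ k - m - 1 := by
      have : ((m + 1 : ℕ) : ℝ) ≤ k := by exact_mod_cast hm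
      push_cast at this; linarith
    set t := (k : ℝ) - m with ht
    have e1 : (k : ℝ) - ((m + 1 : ℕ) : ℝ) = t - 1 := by push_cast; ring
    rw [e1, pow_succ γ m]
    have a1 : LV * ρ + γ * ((2 * D + LV * ρ) * α + 2 * D) ≤ (2 * D + LV * ρ) * α := by
      have e : (2 * D + LV * ρ) * α = (2 * D + LV * ρ) + γ * ((2 * D + LV * ρ) * α) := by
        calc _ = (2 * D + LV * ρ) * (1 + γ * α) := by rw [← hα]
          _ = _ := by ring
      have : γ * D ≤ D := by nlinarith
      nlinarith
    have a2 : γ * (α * t + α ^ 2 + t) ≤ α * (t - 1) + α ^ 2 := by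
      have g1 : γ * α = α - 1 := by linarith
      have g2 : γ * α ^ 2 = α ^ 2 - α := by
        calc γ * α ^ 2 = (γ * α) * α := by ring
          _ = _ := by rw [g1]; ring
      have g3 : γ * (α * t) = α * t - t := by
        calc γ * (α * t) = (γ * α) * t := by ring
          _ = _ := by rw [g1]; ring
      nlinarith
    have a3 := mul_le_mul_of_nonneg_left a2 hG0
    linarith

/-- Corollary 2: `X = [0,1]^d`, finite action space, i.i.d. uniform design
points. With probability at least `1 - δ` (over design points and all samples),
`sup_x |V̂_k^up(x) - V*(x)| ≤ C [ γ^k ‖V̂_0^up - V*‖ + ‖V^π - V*‖ +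
√(d log(d|A|/δ)/M₁) + √d (N⁻¹ log(1/δ) log N)^{1/d} ]` with `C` depending only on
`γ, L_max, L_ψ, L_π, L₀, R_max`. -/
theorem stmt_2 (γ Lmax Lpsi Lpi L0 Rmax : ℝ)
    (hγ0 : 0 < γ) (hγ1 : γ < 1) (hLmax : 0 ≤ Lmax) (hLpsi0 : 0 < Lpsi)
    (hLpsi1 : Lpsi ≤ 1) (hLpi : 0 ≤ Lpi) (hL0 : 0 ≤ L0) (hR : 0 < Rmax) :
    ∃ C : ℝ, 0 < C ∧
      ∀ (d : ℕ), 1 ≤ d →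
      ∀ (A Ξ : Type) [Fintype A] [Nonempty A] [DecidableEq A] [MeasurableSpace A] [MeasurableSingletonClass A]
        [MeasurableSpace Ξ] [Nonempty Ξ]
        (P : Measure Ξ) [IsProbabilityMeasure P]
        (ψ : EuclideanSpace ℝ (Fin d) → A → Ξ → EuclideanSpace ℝ (Fin d)),
        Measurable (fun pr : (EuclideanSpace ℝ (Fin d) × A) × Ξ =>
          ψ pr.1.1 pr.1.2 pr.2) →
        (∀ x ∈ unitCube d, ∀ (a : A) (ξ : Ξ), ψ x a ξ ∈ unitCube d) →
      ∀ (r : A → EuclideanSpace ℝ (Fin d) → ℝ),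
        (∀ (a : A), ∀ x ∈ unitCube d, |r a x| ≤ Rmax) →
      ∀ (Vpi : EuclideanSpace ℝ (Fin d) → ℝ), Measurable Vpi →
        (∀ x ∈ unitCube d, |Vpi x| ≤ Rmax / (1 - γ)) →
        -- A4 on the cube, for the metric ρ((x,a),(x',a')) = ‖x-x'‖ + 1{a≠a'}
        (∀ (a : A), ∀ x ∈ unitCube d, ∀ x' ∈ unitCube d,
          |r a x - r a x'| ≤ Lmax * dist x x') →
        (∀ (ξ : Ξ), ∀ p : EuclideanSpace ℝ (Fin d) × A, p.1 ∈ unitCube d →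
          ∀ q : EuclideanSpace ℝ (Fin d) × A, q.1 ∈ unitCube d →
          dist (ψ p.1 p.2 ξ) (ψ q.1 q.2 ξ) ≤ Lpsi * rhoCube p q) →
        (∀ (ξ : Ξ), ∀ p : EuclideanSpace ℝ (Fin d) × A, p.1 ∈ unitCube d →
          ∀ q : EuclideanSpace ℝ (Fin d) × A, q.1 ∈ unitCube d →
          |Vpi (ψ p.1 p.2 ξ) - Vpi (ψ q.1 q.2 ξ)| ≤ Lpi * rhoCube p q) →
      ∀ (Vstar : EuclideanSpace ℝ (Fin d) → ℝ), Measurable Vstar →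
        (∃ B : ℝ, ∀ x, |Vstar x| ≤ B) →
        (∀ x ∈ unitCube d, Vstar x = ⨆ a : A, (r a x + γ * ∫ ξ, Vstar (ψ x a ξ) ∂P)) →
      ∀ (V0 : EuclideanSpace ℝ (Fin d) → ℝ),
        (∀ x ∈ unitCube d, ∀ x' ∈ unitCube d, |V0 x - V0 x'| ≤ L0 * dist x x') →
      ∀ (N M1 M2 : ℕ), 2 ≤ N → 1 ≤ M1 → 1 ≤ M2 →
      ∀ (k : ℕ) (δ : ℝ), 0 < δ → δ < 1 / 2 →
        ENNReal.ofReal (1 - δ) ≤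
          ((Measure.pi fun _ : Fin N => volume.restrict (unitCube d)).prod
            (Measure.pi fun _ : Fin k => Measure.pi fun _ : Fin (M1 + M2) => P))
            {ω : (Fin N → EuclideanSpace ℝ (Fin d)) ×
                (Fin k → Fin (M1 + M2) → Ξ) |
              ∀ x ∈ unitCube d,
                |uvipIter ψ r γ Vpi M1 M2
                    ((Lmax + 2 * γ * Lpi) / (1 - γ * Lpsi) + L0) ω.1 V0
                    k (extendSamples k (M1 + M2) ω.2) x - Vstar x| ≤
                  C * (γ ^ k * (⨆ x' : unitCube d, |V0 x' - Vstar x'|) +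
                    (⨆ x' : unitCube d, |Vpi x' - Vstar x'|) +
                    Real.sqrt ((d : ℝ) *
                      Real.log ((d : ℝ) * (Fintype.card A : ℝ) / δ) / M1) +
                    Real.sqrt d *
                      (Real.log (1 / δ) * Real.log N / N) ^ (1 / (d : ℝ)))} := by
  have h1γ : 0 < 1 - γ := by linarith
  have hγψ : γ * Lpsi < 1 := by nlinarith
  have hα0 : 0 < (1 - γ)⁻¹ := inv_pos.mpr h1γ
  set LV := (Lmax + 2 * γ * Lpi) / (1 - γ * Lpsi) + L0 with hLVd
  have hq : 0 ≤ (Lmax + 2 * γ * Lpi) / (1 - γ * Lpsi) :=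
    div_nonneg (by positivity) (by linarith)
  have hLV0 : 0 ≤ LV := by linarith
  have hLVs : Lmax + 2 * γ * Lpi + γ * Lpsi * LV ≤ LV := by
    have hne : 1 - γ * Lpsi ≠ 0 := by linarith
    have e : (Lmax + 2 * γ * Lpi) / (1 - γ * Lpsi) * (1 - γ * Lpsi) = Lmax + 2 * γ * Lpi :=
      div_mul_cancel₀ _ hne
    have : γ * Lpsi * L0 ≤ L0 := by nlinarith
    rw [hLVd]
    nlinarith
  set K := Rmax / (1 - γ) + Lpi with hKd
  have hRg : 0 < Rmax / (1 - γ) := by positivity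
  have hK : 0 < K := by positivity
  clear_value LV K
  refine ⟨1 + 2 * (1 - γ)⁻¹ + 12 * LV * (1 - γ)⁻¹ + 32 * K * ((1 - γ)⁻¹) ^ 2, by positivity, ?_⟩
  intro d hd A Ξ _ _ _ _ _ _ _ P _ ψ hψm hψQ r hrb Vpi hVpim hVpib hr hψ hVpi Vstar hVsm hVsb
    hfix V0 hV0 N M1 M2 hN hM1 hM2 k δ hδ0 hδ
  obtain ⟨B, hB⟩ := hVsb
  have : Nonempty (Fin N) := ⟨⟨0, by omega⟩⟩
  have hψm' : ∀ x a, Measurable (fun ξ => ψ x a ξ) := fun x a =>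
    hψm.comp (measurable_prodMk_left (x := (x, a)))
  have hψ' : ∀ a ξ, ∀ x ∈ unitCube d, ∀ y ∈ unitCube d,
      dist (ψ x a ξ) (ψ y a ξ) ≤ Lpsi * dist x y := by
    intro a ξ x hx y hy
    simpa [rhoCube] using hψ ξ (x, a) hx (y, a) hy
  have hVpi' : ∀ a ξ, ∀ x ∈ unitCube d, ∀ y ∈ unitCube d,
      |Vpi (ψ x a ξ) - Vpi (ψ y a ξ)| ≤ Lpi * dist x y := by
    intro a ξ x hx y hy
    simpa [rhoCube] using hVpi ξ (x, a) hx (y, a) hy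
  set E := ⨆ x' : unitCube d, |V0 x' - Vstar x'| with hE
  set D := ⨆ x' : unitCube d, |Vpi x' - Vstar x'| with hD
  set T := Real.sqrt ((d : ℝ) * Real.log ((d : ℝ) * (Fintype.card A : ℝ) / δ) / M1) with hT
  set z := Real.sqrt d * (Real.log (1 / δ) * Real.log N / N) ^ (1 / (d : ℝ)) with hz
  have hT0 : 0 ≤ T := Real.sqrt_nonneg _
  have hz0 : 0 ≤ z := by
    apply mul_nonneg (Real.sqrt_nonneg _)
    apply Real.rpow_nonneg
    apply div_nonneg _ (by positivity)
    apply mul_nonneg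
    · apply Real.log_nonneg; rw [le_div_iff₀ hδ0]; linarith
    · apply Real.log_nonneg; exact_mod_cast (by omega : 1 ≤ N)
  have hE0 : 0 ≤ E := Real.iSup_nonneg fun _ => abs_nonneg _
  have hD0 : 0 ≤ D := Real.iSup_nonneg fun _ => abs_nonneg _
  have h0Q : (0 : EuclideanSpace ℝ (Fin d)) ∈ unitCube d := fun i => by simp
  have hEb : ∀ x ∈ unitCube d, |V0 x - Vstar x| ≤ E := by
    intro x hx
    refine le_ciSup (f := fun x' : unitCube d => |V0 x' - Vstar x'|) ?_ ⟨x, hx⟩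
    refine ⟨L0 * Real.sqrt d + |V0 0| + B, ?_⟩
    rintro _ ⟨⟨y, hy⟩, rfl⟩
    obtain ⟨v, hv⟩ := exists_cell (m := 1) one_pos hy
    obtain ⟨v', hv'⟩ := exists_cell (m := 1) one_pos h0Q
    rw [Subsingleton.elim v' v] at hv'
    have h1 := cell_dist hv hv'
    rw [Nat.cast_one, div_one] at h1
    have h2 := (hV0 y hy 0 h0Q).trans (mul_le_mul_of_nonneg_left h1 hL0)
    have h3 := hB y
    have h4 := le_abs_self (V0 0)
    have h5 := neg_abs_le (V0 0)
    simp only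
    rw [abs_le] at h2 h3 ⊢
    constructor <;> linarith
  have hDb : ∀ x ∈ unitCube d, |Vpi x - Vstar x| ≤ D := by
    intro x hx
    refine le_ciSup (f := fun x' : unitCube d => |Vpi x' - Vstar x'|) ?_ ⟨x, hx⟩
    refine ⟨Rmax / (1 - γ) + B, ?_⟩
    rintro _ ⟨⟨y, hy⟩, rfl⟩
    have h2 := hVpib y hy
    have h3 := hB y
    simp only
    rw [abs_le] at h2 h3 ⊢
    constructor <;> linarith
  have hi1 : ∀ x ∈ unitCube d, ∀ a, Integrable (fun ξ => Vpi (ψ x a ξ)) P := fun x hx a =>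
    integrable_bdd (hVpim.comp (hψm' x a)) fun ξ => hVpib _ (hψQ x hx a ξ)
  have hi2 : ∀ x ∈ unitCube d, ∀ a, Integrable (fun ξ => Vstar (ψ x a ξ)) P := fun x hx a =>
    integrable_bdd (hVsm.comp (hψm' x a)) fun ξ => hB _
  have hV0' : ∀ x ∈ unitCube d, ∀ y ∈ unitCube d, |V0 x - V0 y| ≤ LV * dist x y :=
    fun x hx y hy => (hV0 x hx y hy).trans
      (mul_le_mul_of_nonneg_right (by linarith) dist_nonneg)
  set s : Finset (Fin (M1 + M2)) := Finset.univ.map (Fin.castAddEmb M2) with hs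
  have hscard : s.card = M1 := by simp [hs]
  have hchain := fun j : ℕ => chaining (A := A) P s (by omega) d hd (fun x a ξ => Vpi (ψ x a ξ))
    (fun x a => hVpim.comp (hψm' x a)) K hK
    (fun x hx a ξ => (hVpib _ (hψQ x hx a ξ)).trans (by linarith))
    (fun x hx y hy a ξ => (hVpi' a ξ x hx y hy).trans
      (mul_le_mul_of_nonneg_right (by linarith) dist_nonneg)) δ hδ0 hδ j
  rw [hscard, ← hT] at hchain
  have hdesign := design_prob d N hd hN δ hδ0 hδ
  rw [← hz] at hdesign
  set μ1 := Measure.pi fun _ : Fin N => (volume : Measure (EuclideanSpace ℝ (Fin d))).restrict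
    (unitCube d) with hμ1
  set ν := Measure.pi fun _ : Fin (M1 + M2) => P with hν
  set B1 : Set (Fin N → EuclideanSpace ℝ (Fin d)) :=
    {xs | ¬ ((∀ l, xs l ∈ unitCube d) ∧ ∀ x ∈ unitCube d, ∃ l, dist x (xs l) ≤ 12 * z)} with hB1
  set B2 : ℕ → Set (Fin (M1 + M2) → Ξ) := fun j =>
    {ω | ¬ ∀ x ∈ unitCube d, ∀ a, |mcErr P s (fun ξ => Vpi (ψ x a ξ)) ω| ≤
      4 * (2 * K * (4 * T) * (j + 1))} with hB2
  set good := {ω : (Fin N → EuclideanSpace ℝ (Fin d)) × (Fin k → Fin (M1 + M2) → Ξ) |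
      ∀ x ∈ unitCube d,
        |uvipIter ψ r γ Vpi M1 M2 LV ω.1 V0 k (extendSamples k (M1 + M2) ω.2) x - Vstar x| ≤
          (1 + 2 * (1 - γ)⁻¹ + 12 * LV * (1 - γ)⁻¹ + 32 * K * ((1 - γ)⁻¹) ^ 2) *
            (γ ^ k * E + D + T + z)} with hgood
  have hsub : goodᶜ ⊆ Prod.fst ⁻¹' B1 ∪
      ⋃ i : Fin k, (fun ω => ω.2 i) ⁻¹' B2 (k - 1 - i) := by
    intro ω hω
    by_contra hcon
    apply hω
    simp only [Set.mem_union, Set.mem_iUnion, Set.mem_preimage, not_or, not_exists, hB1, hB2,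
      Set.mem_ofPred_eq, not_not] at hcon
    obtain ⟨⟨hc1, hc2⟩, hc3⟩ := hcon
    have hG : ∀ i < k, ∀ x ∈ unitCube d, ∀ a,
        |(M1 : ℝ)⁻¹ * ∑ l ∈ Finset.range M1,
          Vpi (ψ x a (extendSamples k (M1 + M2) ω.2 i l)) - ∫ ξ, Vpi (ψ x a ξ) ∂P| ≤
          (32 * K * T) * (k - i) := by
      intro i hi x hx a
      have h := hc3 ⟨i, hi⟩ x hx a
      have e1 : mcErr P s (fun ξ => Vpi (ψ x a ξ)) (ω.2 ⟨i, hi⟩) =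
          (M1 : ℝ)⁻¹ * ∑ l ∈ Finset.range M1,
          Vpi (ψ x a (extendSamples k (M1 + M2) ω.2 i l)) - ∫ ξ, Vpi (ψ x a ξ) ∂P := by
        unfold mcErr
        rw [hscard, hs, Finset.sum_map, Finset.sum_range]
        congr 2
        refine Finset.sum_congr rfl fun l _ => ?_
        have hl : i < k ∧ (l : ℕ) < M1 + M2 := ⟨hi, by omega⟩
        unfold extendSamples
        rw [dif_pos hl]
        rfl
      rw [e1] at h
      refine h.trans (le_of_eq ?_)
      have e2 : ((k - 1 - i : ℕ) : ℝ) + 1 = k - i := by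
        have : k - 1 - i + 1 + i = k := by omega
        have h' : (((k - 1 - i + 1 + i : ℕ)) : ℝ) = k := by rw [this]
        push_cast at h'
        linarith
      rw [e2]; ring
    have hfin := (uvip_det P (unitCube d) ψ r hγ0 hγ1 Vpi V0 Vstar hM1 hM2 hLV0 hLVs hψQ hr hψ'
      hVpi' hV0' hi1 hi2 hfix hEb hDb hD0 (by positivity : 0 ≤ 32 * K * T)
      (by positivity : 0 ≤ 12 * z) ω.1 hc1 hc2 k (extendSamples k (M1 + M2) ω.2) hG k le_rfl).2
    intro x hx
    refine (hfin x hx).trans ?_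
    rw [sub_self, mul_zero, zero_add]
    set α := (1 - γ)⁻¹
    have p1 : 0 ≤ γ ^ k * E := by positivity
    have q1 : 0 ≤ LV * α := by positivity
    have q2 : 0 ≤ K * α ^ 2 := by positivity
    have m1 : 0 ≤ (2 * α + 12 * (LV * α) + 32 * (K * α ^ 2)) * (γ ^ k * E) := by positivity
    have m2 : 0 ≤ (1 + 12 * (LV * α) + 32 * (K * α ^ 2)) * D := by positivity
    have m3 : 0 ≤ (1 + 2 * α + 12 * (LV * α)) * T := by positivity
    have m4 : 0 ≤ (1 + 2 * α + 32 * (K * α ^ 2)) * z := by positivity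
    linarith
  have hb1 : (μ1.prod (Measure.pi fun _ : Fin k => ν)) (Prod.fst ⁻¹' B1) ≤
      ENNReal.ofReal (δ / 2) := by
    refine (Measure.le_map_apply measurable_fst.aemeasurable _).trans ?_
    rw [(measurePreserving_fst (μ := μ1) (ν := Measure.pi fun _ : Fin k => ν)).map_eq]
    exact hdesign
  have hb2 : ∀ i : Fin k, (μ1.prod (Measure.pi fun _ : Fin k => ν))
      ((fun ω => ω.2 i) ⁻¹' B2 (k - 1 - i)) ≤
      ENNReal.ofReal (δ / 2 * (1 / 2) ^ (k - 1 - (i : ℕ) + 1)) := by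
    intro i
    have hmp : MeasurePreserving
        (fun ω : (Fin N → EuclideanSpace ℝ (Fin d)) × (Fin k → Fin (M1 + M2) → Ξ) => ω.2 i)
        (μ1.prod (Measure.pi fun _ : Fin k => ν)) ν :=
      (measurePreserving_eval (fun _ : Fin k => ν) i).comp measurePreserving_snd
    refine (Measure.le_map_apply hmp.measurable.aemeasurable _).trans ?_
    rw [hmp.map_eq]
    exact hchain _
  have hsumr : ∑ i : Fin k, δ / 2 * (1 / 2 : ℝ) ^ (k - 1 - (i : ℕ) + 1) ≤ δ / 2 := by
    rw [Fin.sum_univ_eq_sum_range (fun i => δ / 2 * (1 / 2 : ℝ) ^ (k - 1 - i + 1)) k,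
      Finset.sum_range_reflect (fun i => δ / 2 * (1 / 2 : ℝ) ^ (i + 1)) k, ← Finset.mul_sum]
    have : ∑ i ∈ Finset.range k, (1 / 2 : ℝ) ^ (i + 1) ≤ 1 := by
      have h : ∀ n : ℕ, ∑ i ∈ Finset.range n, (1 / 2 : ℝ) ^ (i + 1) = 1 - (1 / 2) ^ n := by
        intro n
        induction n with
        | zero => simp
        | succ n ih => rw [Finset.sum_range_succ, ih]; ring
      rw [h]
      have : (0 : ℝ) ≤ (1 / 2) ^ k := by positivity
      linarith
    nlinarith
  have hbad : (μ1.prod (Measure.pi fun _ : Fin k => ν)) goodᶜ ≤ ENNReal.ofReal δ := by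
    refine (measure_mono hsub).trans ((measure_union_le _ _).trans ?_)
    have e : δ = δ / 2 + δ / 2 := by ring
    rw [e, ENNReal.ofReal_add (by positivity) (by positivity)]
    refine add_le_add hb1 ((measure_iUnion_fintype_le _ _).trans ?_)
    refine (Finset.sum_le_sum fun i _ => hb2 i).trans ?_
    rw [← ENNReal.ofReal_sum_of_nonneg (fun i _ => by positivity)]
    exact ENNReal.ofReal_le_ofReal hsumr
  rw [ENNReal.ofReal_sub _ hδ0.le, ENNReal.ofReal_one, tsub_le_iff_right]
  calc (1 : ENNReal) = (μ1.prod (Measure.pi fun _ : Fin k => ν)) Set.univ := measure_univ.symm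
    _ = (μ1.prod (Measure.pi fun _ : Fin k => ν)) (good ∪ goodᶜ) := by rw [Set.union_compl_self]
    _ ≤ _ := (measure_union_le _ _).trans (add_le_add le_rfl hbad)
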